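/- arXiv:math/0012217 — 6 statements merged into one kernel-verified Lean document; each statement's English description precedes it below -/
import Mathlib

section
/- For every n ≥ 7, the inclusion A_n ↪ A_{n+1}, given by extending each even permutation of {1, …, n} to a permutation of {1, …, n+1} fixing the point n+1, is a localization. -/
/-- A group homomorphism `φ : H →* G` is a localization if precomposition with `φ`
induces a bijection `Hom(G,G) ≃ Hom(H,G)`. -/
def IsLocalizationHom {H G : Type*} [Group H] [Group G] (φ : H →* G) : Prop :=
  Function.Bijective fun ψ : G →* G => ψ.comp φ

open Equiv Equiv.Perm

lemma aux_pow30_of_small {α : Type*} [Fintype α] [DecidableEq α] (p : Perm α)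
    (hp : p.support.card ≤ 5) (hs : sign p = 1) : p ^ 30 = 1 := by
  rw [← orderOf_dvd_iff_pow_eq_one, ← lcm_cycleType, Multiset.lcm_dvd]
  intro k hk
  have h2 := two_le_of_mem_cycleType hk
  rw [← sum_cycleType] at hp
  rw [sign_of_cycleType] at hs
  obtain ⟨m, hm⟩ := Multiset.exists_cons_of_mem hk
  have hm2 : ∀ j ∈ m, 2 ≤ j := fun j hj => two_le_of_mem_cycleType (σ := p) (by simp [hm, hj])
  rw [hm] at hp hs
  simp only [Multiset.sum_cons, Multiset.card_cons] at hp hs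
  have hc : m.card * 2 ≤ m.sum := by
    have := Multiset.card_nsmul_le_sum hm2
    simpa using this
  by_cases h4 : k = 4
  · subst h4
    have h0 : m.card = 0 := by omega
    rw [Multiset.card_eq_zero] at h0
    subst h0
    revert hs; decide
  · have : k ≤ 5 := by omega
    interval_cases k <;> first | omega | decide

lemma aux_mul_pow30 {α : Type*} [Fintype α] [DecidableEq α] {s t : Perm α}
    (hs : s.IsThreeCycle) (ht : t.IsThreeCycle) : (s * t) ^ 30 = 1 := by
  by_cases hd : Disjoint s t
  · have h1 : s ^ 3 = 1 := by rw [← hs.orderOf]; exact pow_orderOf_eq_one s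
    have h2 : t ^ 3 = 1 := by rw [← ht.orderOf]; exact pow_orderOf_eq_one t
    rw [hd.commute.mul_pow, show 30 = 3 * 10 by rfl, pow_mul, pow_mul, h1, h2]; simp
  · apply aux_pow30_of_small
    · have h1 := Finset.card_union_add_card_inter s.support t.support
      rw [disjoint_iff_disjoint_support, Finset.disjoint_iff_inter_eq_empty,
        ← Finset.card_eq_zero] at hd
      have h2 := Finset.card_le_card (support_mul_le s t)
      rw [hs.card_support, ht.card_support] at h1
      have : (s.support ⊔ t.support) = s.support ∪ t.support := rfl
      rw [this] at h2
      omega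
    · simp [hs.sign, ht.sign]

lemma aux_transport {α : Type*} [Fintype α] [DecidableEq α] {k : ℕ} (s : Perm α)
    (h : ∀ g ∈ alternatingGroup α, (s * (g * s⁻¹ * g⁻¹)) ^ 30 = 1)
    (ι : Fin k → α) (hι : Function.Injective ι) (s0 g0 : Perm (Fin k))
    (hs0 : ∀ i, s (ι i) = ι (s0 i)) (hg0 : sign g0 = 1) :
    (s0 * (g0 * s0⁻¹ * g0⁻¹)) ^ 30 = 1 := by
  set g : Perm α := g0.viaFintypeEmbedding ⟨ι, hι⟩ with hg
  have h1 := h g (by rw [mem_alternatingGroup, hg, viaFintypeEmbedding_sign, hg0])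
  have hgi : ∀ i, g (ι i) = ι (g0 i) := fun i => 
    viaFintypeEmbedding_apply_image g0 ⟨ι, hι⟩ i
  have hsi : ∀ i, s⁻¹ (ι i) = ι (s0⁻¹ i) := fun i => by
    rw [inv_eq_iff_eq, hs0]; simp
  have hgi' : ∀ i, g⁻¹ (ι i) = ι (g0⁻¹ i) := fun i => by
    rw [inv_eq_iff_eq, hgi]; simp
  have hc : ∀ i, (s * (g * s⁻¹ * g⁻¹)) (ι i) = ι ((s0 * (g0 * s0⁻¹ * g0⁻¹)) i) := by
    intro i
    simp only [Perm.mul_apply, hgi, hgi', hsi, hs0]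
  have hp : ∀ (m : ℕ) i, ((s * (g * s⁻¹ * g⁻¹))^m) (ι i) = ι (((s0 * (g0 * s0⁻¹ * g0⁻¹))^m) i) := by
    intro m
    induction m with
    | zero => intro i; simp
    | succ m ih => intro i; rw [pow_succ, pow_succ, Perm.mul_apply _ (s * _), Perm.mul_apply _ (s0 * _), hc, ih]
  ext1 i
  apply hι
  rw [← hp, h1]; simp

set_option maxRecDepth 20000 in
lemma aux_detect {α : Type*} [Fintype α] [DecidableEq α] (hα : 7 ≤ Fintype.card α) (s : Perm α)
    (h : ∀ g ∈ alternatingGroup α, (s * (g * s⁻¹ * g⁻¹)) ^ 30 = 1) (h1 : s ≠ 1) (h3 : s ^ 3 = 1) :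
    s.IsThreeCycle := by
  have hs3 : ∀ x, s (s (s x)) = x := fun x => by
    have := congrArg (fun p : Perm α => p x) h3
    simpa [pow_succ] using this
  have hinj : ∀ x y, s x = s y → x = y := fun x y h => s.injective h
  obtain ⟨a, ha⟩ : ∃ a, s a ≠ a := by
    by_contra! hh
    exact h1 (Equiv.ext hh)
  by_cases hb : ∃ b, s b ≠ b ∧ b ≠ a ∧ b ≠ s a ∧ b ≠ s (s a)
  · exfalso
    obtain ⟨b, hb, hb1, hb2, hb3⟩ := hb
    obtain ⟨c, hc⟩ : ∃ c, c ∉ ({a, s a, s (s a), b, s b, s (s b)} : Finset α) := by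
      by_contra! hh
      have := Finset.card_le_six (a := a) (b := s a) (c := s (s a)) (d := b) (e := s b) (f := s (s b))
      have h2 : Finset.univ ⊆ ({a, s a, s (s a), b, s b, s (s b)} : Finset α) := fun x _ => hh x
      have := Finset.card_le_card h2
      rw [Finset.card_univ] at this
      omega
    simp only [Finset.mem_insert, Finset.mem_singleton, not_or] at hc
    by_cases hcc : s c = c
    · have := aux_transport s h ![a, s a, s (s a), b, s b, s (s b), c]
        (by 
          have : List.Nodup [a, s a, s (s a), b, s b, s (s b), c] := by
            simp only [List.nodup_cons, List.mem_cons, List.not_mem_nil, or_false, not_or]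
            clear h h1 h3; grind
          rw [← List.nodup_ofFn]; simpa using this)
        (swap 0 1 * swap 1 2 * (swap 3 4 * swap 4 5)) (swap 0 3 * swap 1 6)
        (by intro i; fin_cases i <;> simp [Equiv.swap_apply_def, hs3, hcc]) (by decide)
      revert this; decide
    · have := aux_transport s h ![a, s a, s (s a), b, s b, s (s b), c, s c, s (s c)]
        (by 
          have : List.Nodup [a, s a, s (s a), b, s b, s (s b), c, s c, s (s c)] := by
            simp only [List.nodup_cons, List.mem_cons, List.not_mem_nil, or_false, not_or]
            clear h h1 h3; grind
          rw [← List.nodup_ofFn]; simpa using this)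
        (swap 0 1 * swap 1 2 * (swap 3 4 * swap 4 5) * (swap 6 7 * swap 7 8)) 
        (swap 2 3 * swap 7 8 * (swap 4 5 * swap 5 6))
        (by intro i; fin_cases i <;> simp [Equiv.swap_apply_def, hs3]) (by decide)
      revert this; decide
  · push Not at hb
    rw [← card_support_eq_three_iff]
    have : s.support = {a, s a, s (s a)} := by
      ext x; simp only [mem_support, Finset.mem_insert, Finset.mem_singleton]
      grind
    rw [this]
    rw [Finset.card_eq_three]
    exact ⟨a, s a, s (s a), by grind, by grind, by grind, rfl⟩

lemma aux_tc {α : Type*} [Fintype α] [DecidableEq α] {s : Perm α} (hs : s.IsThreeCycle) :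
    (∀ x, s (s (s x)) = x) ∧
    (∀ x y, s x ≠ x → s y ≠ y → y = x ∨ y = s x ∨ y = s (s x)) := by
  have h3 : s ^ 3 = 1 := by rw [← hs.orderOf]; exact pow_orderOf_eq_one s
  refine ⟨fun x => ?_, fun x y hx hy => ?_⟩
  · have := congrArg (fun p : Perm α => p x) h3
    simpa [pow_succ] using this
  · have := hs.support_eq_iff_mem_support.2 (mem_support.2 hx)
    have hy' := mem_support.2 hy
    rw [this] at hy'
    simpa using hy'

lemma aux_share {α : Type*} [Fintype α] [DecidableEq α] {s t : Perm α} (hs : s.IsThreeCycle)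
    (ht : t.IsThreeCycle) (h2 : (s * t) ^ 2 = 1) (h1 : s * t ≠ 1) :
    ∃ p, s p ≠ p ∧ s p = t p := by
  obtain ⟨hs3, hso⟩ := aux_tc hs
  obtain ⟨ht3, hto⟩ := aux_tc ht
  have h2' : ∀ x, s (t (s (t x))) = x := fun x => by
    have := congrArg (fun p : Perm α => p x) h2
    simpa [pow_succ] using this
  have h1' : ∃ x, s (t x) ≠ x := by
    by_contra! hh
    exact h1 (Equiv.ext hh)
  obtain ⟨x, hx⟩ : ∃ x, s x ≠ x := by
    by_contra! hh
    exact hs.ne_one (Equiv.ext hh)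
  clear h1 h2 hs ht
  by_contra! hno
  by_cases hd : ∃ y, s y ≠ y ∧ t y ≠ y
  · obtain ⟨y, hy1, hy2⟩ := hd
    have a1 := hno y hy1
    have a2 := hno (s y) (by grind)
    have a3 := hno (s (s y)) (by grind)
    have b1 := h2' y
    have b2 := h2' (t y)
    have b3 := h2' (t (t y))
    have b4 := h2' (s y)
    have b5 := h2' (s (s y))
    obtain ⟨z, hz⟩ := h1'
    have c1 := hso y z hy1
    have c2 := hto y z hy2
    have d1 := hso y (t y) hy1
    have d2 := hso y (t (t y)) hy1
    have d3 := hto y (s y) hy2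
    have d4 := hto y (s (s y)) hy2
    have e1 := hs3 y
    have e2 := ht3 y
    have e3 : s (s y) ≠ y := by intro h; rw [h] at e1; exact hy1 e1
    have e4 : t (t y) ≠ y := by intro h; rw [h] at e2; exact hy2 e2
    have e5 : s (s y) ≠ s y := fun h => hy1 (s.injective h)
    have e6 : t (t y) ≠ t y := fun h => hy2 (t.injective h)
    clear hso hto hs3 ht3 h2' hno hx x
    rw [e1] at a3
    rw [e2] at b3
    generalize hA : s y = A at *
    generalize hB : s A = B at *
    generalize hC : t y = C at *
    generalize hD : t C = D at *
    by_cases f1 : A = D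
    · by_cases f2 : B = C
      · subst f1 f2
        by_cases z1 : z = y
        · subst z1; exact hz (by rw [hC, e1])
        by_cases z2 : z = A
        · subst z2; exact hz (by rw [e2, hA])
        by_cases z3 : z = B
        · subst z3; exact hz (by rw [hD, hB])
        have z4 : s z = z := by grind
        have z5 : t z = z := by grind
        exact hz (by rw [z5, z4])
      · grind
    · by_cases f2 : B = C
      · grind
      · by_cases f3 : B = D
        · grind
        · grind
  · push Not at hd
    have e1 := hd x hx
    have e2 := hd (s x) (by grind)
    have e3 := h2' x
    grind

lemma aux_common {α : Type*} [Fintype α] [DecidableEq α] {s t u : Perm α} (hs : s.IsThreeCycle)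
    (ht : t.IsThreeCycle) (hu : u.IsThreeCycle) (hst : s ≠ t) {p : α} (hp : s p ≠ p)
    (hp2 : s p = t p) (h1 : ∃ q, u q ≠ q ∧ u q = s q) (h2 : ∃ q, u q ≠ q ∧ u q = t q) :
    u p = s p := by
  obtain ⟨hs3, hso⟩ := aux_tc hs
  obtain ⟨ht3, hto⟩ := aux_tc ht
  obtain ⟨hu3, huo⟩ := aux_tc hu
  have hss := (hs.eq_swap_mul_swap_iff_mem_support (a := p)).2 (mem_support.2 hp)
  have htt := (ht.eq_swap_mul_swap_iff_mem_support (a := p)).2 (mem_support.2 (by grind))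
  have hne : s (s p) ≠ t (t p) := by
    intro h
    apply hst
    rw [hss, htt, ← h, hp2]
  clear hss htt hst hs ht hu
  obtain ⟨x, hx1, hx2⟩ := h1
  obtain ⟨y, hy1, hy2⟩ := h2
  have a1 := hso p x hp (by grind)
  have a2 := hto p y (by grind) (by grind)
  have a3 := huo x y hx1 hy1
  have a4 := hs3 p
  have a5 := ht3 p
  have a6 := hu3 x
  have i1 := s.injective.eq_iff (a := p) (b := s p)
  have i2 := s.injective.eq_iff (a := s p) (b := s (s p))
  have i3 := t.injective.eq_iff (a := t p) (b := t (t p))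
  have i4 := u.injective.eq_iff (a := x) (b := y)
  clear hso hto huo 
  grind

lemma aux_gen {α : Type*} [Fintype α] [DecidableEq α] (K : Subgroup (Perm α)) (a b : α)
    (hab : a ≠ b) (h : ∀ c, c ≠ a → c ≠ b → swap a b * swap b c ∈ K) :
    alternatingGroup α ≤ K := by
  have hu : ∀ x, x ≠ a → swap a b * swap a x ∈ K := by
    intro x hx
    by_cases hxb : x = b
    · subst hxb; simp [one_mem]
    · have h1 := h x hx hxb
      have : swap a b * swap a x = (swap a b * swap b x) * (swap a b * swap b x) := by
        ext y
        simp only [Perm.mul_apply, swap_apply_def]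
        grind
      rw [this]
      exact mul_mem h1 h1
  have hu2 : ∀ x y, x ≠ a → y ≠ a → swap a x * swap a y ∈ K := by
    intro x y hx hy
    have := mul_mem (inv_mem (hu x hx)) (hu y hy)
    simpa [mul_assoc] using this
  have hsw : ∀ x y, x ≠ y → swap a b * swap x y ∈ K := by
    intro x y hxy
    by_cases hx : x = a
    · subst hx; exact hu y hxy.symm
    by_cases hy : y = a
    · subst hy; rw [swap_comm x]; exact hu x hx
    have : swap x y = swap a x * swap a y * swap a x := by
      ext z
      simp only [Perm.mul_apply, swap_apply_def]
      grind
    rw [this, ← mul_assoc, ← mul_assoc, mul_assoc]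
    exact mul_mem (hu x hx) (hu2 y x hy hx)
  rw [← closure_three_cycles_eq_alternating, Subgroup.closure_le]
  intro g hg
  obtain ⟨x, hx⟩ : ∃ x, g x ≠ x := by
    by_contra! hh
    exact hg.ne_one (Equiv.ext hh)
  have := (hg.eq_swap_mul_swap_iff_mem_support (a := x)).2 (mem_support.2 hx)
  rw [this]
  have h1 := mul_mem (inv_mem (hsw x (g x) hx.symm)) (hsw (g x) (g (g x)) 
    (by rw [Ne, g.injective.eq_iff]; exact hx.symm))
  simpa [mul_assoc] using h1

lemma aux_conj {α : Type*} [Fintype α] [DecidableEq α] (hα : 7 ≤ Fintype.card α)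
    (φ : alternatingGroup α →* Perm α) (hφ : Function.Injective φ)
    (h3 : ∀ g : alternatingGroup α, IsThreeCycle (g : Perm α) → IsThreeCycle (φ g)) :
    ∃ f : Perm α, ∀ g : alternatingGroup α, φ g = f * g * f⁻¹ := by
  classical
  have hex : ∀ s : Finset α, s.card ≤ 3 → ∃ x, x ∉ s := by
    intro s hs
    by_contra! hh
    have h2 : Finset.univ ⊆ s := fun x _ => hh x
    have := Finset.card_le_card h2
    rw [Finset.card_univ] at this
    omega
  obtain ⟨a, -⟩ := hex ∅ (by simp)
  obtain ⟨b, hb⟩ := hex {a} (by simp)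
  obtain ⟨c0, hc0⟩ := hex {a, b} (Finset.card_le_two.trans (by norm_num))
  obtain ⟨c1, hc1⟩ := hex {a, b, c0} Finset.card_le_three
  simp only [Finset.mem_insert, Finset.mem_singleton, not_or] at hb hc0 hc1
  have hab : a ≠ b := fun h => hb h.symm
  have hcyc : ∀ c, c ≠ a → c ≠ b → IsThreeCycle (swap a b * swap b c) := by
    intro c hca hcb
    rw [swap_comm a b]
    exact isThreeCycle_swap_mul_swap_same hab.symm hcb.symm hca.symm
  set T : α → Perm α := fun c => if h : swap a b * swap b c ∈ alternatingGroup α then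
    φ ⟨_, h⟩ else 1 with hTdef
  have hT : ∀ c (h : swap a b * swap b c ∈ alternatingGroup α), T c = φ ⟨_, h⟩ := by
    intro c h
    simp only [hTdef, h, dif_pos]
  have hmem : ∀ c, c ≠ a → c ≠ b → swap a b * swap b c ∈ alternatingGroup α :=
    fun c h1 h2 => (hcyc c h1 h2).mem_alternatingGroup
  have hT3 : ∀ c, c ≠ a → c ≠ b → IsThreeCycle (T c) := by
    intro c h1 h2
    rw [hT c (hmem c h1 h2)]
    exact h3 _ (hcyc c h1 h2)
  have hTinj : ∀ c d, c ≠ a → c ≠ b → d ≠ a → d ≠ b → T c = T d → c = d := by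
    intro c d h1 h2 h3 h4 h
    rw [hT c (hmem c h1 h2), hT d (hmem d h3 h4)] at h
    have h5 := congrArg Subtype.val (hφ h)
    simp only [mul_right_inj] at h5
    have := congrArg (fun p : Perm α => p b) h5
    simpa using this
  have hshare : ∀ c d, c ≠ a → c ≠ b → d ≠ a → d ≠ b → c ≠ d → 
      ∃ p, T c p ≠ p ∧ T c p = T d p := by
    intro c d h1 h2 h3 h4 h
    apply aux_share (hT3 c h1 h2) (hT3 d h3 h4)
    · rw [hT c (hmem c h1 h2), hT d (hmem d h3 h4), ← map_mul, ← map_pow]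
      convert map_one φ
      ext x
      simp only [Subgroup.coe_pow, Subgroup.coe_mul, pow_two, Perm.mul_apply, swap_apply_def,
        Subgroup.coe_one, Perm.one_apply]
      grind
    · rw [hT c (hmem c h1 h2), hT d (hmem d h3 h4), ← map_mul, Ne, ← map_one φ, hφ.eq_iff]
      intro hh
      have := congrArg (fun p : alternatingGroup α => (p : Perm α) a) hh
      simp only [Subgroup.coe_mul, Perm.mul_apply, swap_apply_def,
        Subgroup.coe_one, Perm.one_apply] at this
      grind
  obtain ⟨p, hp1, hp2⟩ := hshare c0 c1 hc0.1 hc0.2 hc1.1 hc1.2.1 (fun h => hc1.2.2 h.symm)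
  set q := T c0 p with hq
  have hTp : ∀ c, c ≠ a → c ≠ b → T c p = q := by
    intro c h1 h2
    by_cases e0 : c = c0
    · subst e0; rfl
    by_cases e1 : c = c1
    · subst e1; exact hp2.symm
    refine aux_common (hT3 c0 hc0.1 hc0.2) (hT3 c1 hc1.1 hc1.2.1) (hT3 c h1 h2) ?_ hp1 hp2
      (hshare c c0 h1 h2 hc0.1 hc0.2 e0) (hshare c c1 h1 h2 hc1.1 hc1.2.1 e1)
    intro h
    exact hc1.2.2 (hTinj _ _ hc0.1 hc0.2 hc1.1 hc1.2.1 h).symm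
  have hTeq : ∀ c, c ≠ a → c ≠ b → T c = swap p q * swap q (T c q) := by
    intro c h1 h2
    have hh := hTp c h1 h2
    have := ((hT3 c h1 h2).eq_swap_mul_swap_iff_mem_support (a := p)).2
      (mem_support.2 (by rw [hh]; exact hp1))
    rw [hh] at this
    exact this
  have hTq : ∀ c, c ≠ a → c ≠ b → T c q ≠ q ∧ T c q ≠ p := by
    intro c h1 h2
    have hh := hTp c h1 h2
    have h3 := (aux_tc (hT3 c h1 h2)).1 p
    rw [hh] at h3
    refine ⟨fun h => ?_, fun h => ?_⟩
    · rw [← hh] at h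
      exact hp1 (hh ▸ (T c).injective h)
    · rw [h, hh] at h3
      exact hp1 h3
  let f0 : α → α := fun c => if c = a then p else if c = b then q else T c q
  have f0inj : Function.Injective f0 := by
    intro c d hcd
    simp only [f0] at hcd
    have k : ∀ c, c ≠ a → c ≠ b → ∀ d, d ≠ a → d ≠ b → T c q = T d q → c = d := by
      intro c h1 h2 d h3 h4 h
      apply hTinj c d h1 h2 h3 h4
      rw [hTeq c h1 h2, hTeq d h3 h4, h]
    have k1 := hTq c
    have k2 := hTq d
    have k3 := k c
    split_ifs at hcd <;> grind
  let f : Perm α := Equiv.ofBijective f0 (Finite.injective_iff_bijective.1 f0inj)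
  have fa : f a = p := by simp [f, f0]
  have fb : f b = q := by simp [f, f0, hb]
  have fc : ∀ c, c ≠ a → c ≠ b → f c = T c q := by
    intro c h1 h2
    simp [f, f0, h1, h2]
  refine ⟨f, ?_⟩
  let ψ : alternatingGroup α →* Perm α := (MulAut.conj f).toMonoidHom.comp (alternatingGroup α).subtype
  have key := aux_gen ((φ.eqLocus ψ).map (alternatingGroup α).subtype) a b hab (by
    intro c h1 h2
    refine ⟨⟨_, hmem c h1 h2⟩, ?_, rfl⟩
    change φ _ = f * (swap a b * swap b c) * f⁻¹
    rw [← hT c (hmem c h1 h2), hTeq c h1 h2, ← fc c h1 h2, ← fa, ← fb,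
      swap_apply_apply, swap_apply_apply]
    group)
  intro g
  obtain ⟨g', hg', hgg⟩ := key g.2
  have : g' = g := Subtype.ext hgg
  subst this
  exact hg'

lemma aux_sign {α : Type*} [Fintype α] [DecidableEq α] (hα : 7 ≤ Fintype.card α)
    (φ : alternatingGroup α →* ℤˣ) (g : alternatingGroup α) : φ g = 1 := by
  have h := Abelianization.commutator_subset_ker φ
  rw [commutator_alternatingGroup_eq_top (by rw [Nat.card_eq_fintype_card]; omega)] at h
  exact h (Subgroup.mem_top g)

lemma aux_aut {α : Type*} [Fintype α] [DecidableEq α] (hα : 7 ≤ Fintype.card α)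
    (φ : alternatingGroup α →* Perm α) (hφ : Function.Injective φ) :
    ∃ f : Perm α, ∀ g : alternatingGroup α, φ g = f * g * f⁻¹ := by
  apply aux_conj hα φ hφ
  have hs : ∀ g, φ g ∈ alternatingGroup α := fun g => aux_sign hα (sign.comp φ) g
  let φ' : alternatingGroup α →* alternatingGroup α := φ.codRestrict _ hs
  have hφ' : Function.Injective φ' := fun x y h => hφ (congrArg Subtype.val h)
  have hsurj := Finite.surjective_of_injective hφ'
  intro g hg
  apply aux_detect hα
  · intro k hk
    obtain ⟨k', hk'⟩ := hsurj ⟨k, hk⟩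
    have : k = φ k' := (congrArg Subtype.val hk').symm
    rw [this, ← map_inv, ← map_inv, ← map_mul, ← map_mul, ← map_mul, ← map_pow]
    convert map_one φ
    apply Subtype.ext
    simp only [Subgroup.coe_pow, Subgroup.coe_mul, Subgroup.coe_inv, Subgroup.coe_one]
    apply aux_mul_pow30 hg
    have : IsThreeCycle (g : Perm α)⁻¹ := hg.inv
    unfold IsThreeCycle at *
    rw [cycleType_conj, this]
  · intro h
    rw [← map_one φ] at h
    have := hφ h
    subst this
    exact hg.ne_one rfl
  · rw [← map_pow]
    convert map_one φ
    apply Subtype.ext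
    have := pow_orderOf_eq_one (g : Perm α)
    rw [hg.orderOf] at this
    simpa using this

lemma aux_aut' {α β : Type*} [Fintype α] [DecidableEq α] [Fintype β] (hα : 7 ≤ Fintype.card α)
    (hβ : Fintype.card α = Fintype.card β)
    (φ : alternatingGroup α →* Perm β) (hφ : Function.Injective φ) :
    ∃ f : α ≃ β, ∀ (g : alternatingGroup α) x, φ g (f x) = f ((g : Perm α) x) := by
  let e := Fintype.equivOfCardEq hβ
  obtain ⟨f, hf⟩ := aux_aut hα ((e.symm.permCongrHom).toMonoidHom.comp φ)
    (e.symm.permCongrHom.injective.comp hφ)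
  refine ⟨f.trans e, fun g x => ?_⟩
  have := congrArg (fun p : Perm α => p (f x)) (hf g)
  have h2 : e.symm (φ g (e (f x))) = f ((g : Perm α) (f⁻¹ (f x))) := this
  have h3 : f⁻¹ (f x) = x := f.symm_apply_apply x
  rw [h3, Equiv.symm_apply_eq] at h2
  exact h2

lemma aux_triv_or_inj {α G : Type*} [Fintype α] [DecidableEq α] [Group G]
    (hα : 7 ≤ Fintype.card α) (φ : alternatingGroup α →* G) :
    Function.Injective φ ∨ ∀ g, φ g = 1 := by
  have := alternatingGroup.isSimpleGroup (α := α) (by rw [Nat.card_eq_fintype_card]; omega)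
  rcases IsSimpleGroup.eq_bot_or_eq_top_of_normal φ.ker inferInstance with h | h
  · left; exact (MonoidHom.ker_eq_bot_iff φ).1 h
  · right; intro g
    have : g ∈ φ.ker := by rw [h]; exact Subgroup.mem_top g
    exact this

lemma aux_fix (n : ℕ) (hn : 7 ≤ n)
    (φ : alternatingGroup (Fin n) →* alternatingGroup (Fin (n + 1)))
    (hφ : Function.Injective φ) :
    ∃ x, ∀ σ, (φ σ : Perm (Fin (n + 1))) x = x := by
  classical
  have : Nontrivial (Fin n) := Fin.nontrivial_iff_two_le.2 (by omega)
  have : Nontrivial (Fin (n + 1)) := Fin.nontrivial_iff_two_le.2 (by omega)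
  set H := φ.range with hH
  have hidx : H.index = n + 1 := by
    have h1 := Subgroup.card_mul_index H
    have h2 : Nat.card H = Nat.card (alternatingGroup (Fin n)) :=
      (Nat.card_congr (MonoidHom.ofInjective hφ).toEquiv).symm
    have h3 := two_mul_nat_card_alternatingGroup (α := Fin n)
    have h4 := two_mul_nat_card_alternatingGroup (α := Fin (n + 1))
    have h5 : 0 < Nat.card (alternatingGroup (Fin n)) := Nat.card_pos
    rw [Nat.card_perm, Nat.card_fin] at h3 h4
    rw [Nat.factorial_succ, ← h3, ← h1, h2] at h4
    apply Nat.eq_of_mul_eq_mul_left h5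
    linarith
  let θ := MulAction.toPermHom (alternatingGroup (Fin (n + 1))) (alternatingGroup (Fin (n + 1)) ⧸ H)
  have hθ : Function.Injective θ := by
    rcases aux_triv_or_inj (by simp; omega) θ with h | h
    · exact h
    · exfalso
      have : H = ⊤ := by
        rw [eq_top_iff]
        intro g _
        have h1 := congrArg (fun p : Perm _ => p (QuotientGroup.mk 1)) (h g)
        have h2 : (QuotientGroup.mk (g * 1) : alternatingGroup (Fin (n + 1)) ⧸ H) =
          QuotientGroup.mk 1 := h1
        rw [eq_comm, QuotientGroup.eq] at h2
        simpa using h2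
      rw [this, Subgroup.index_top] at hidx
      omega
  obtain ⟨e, he⟩ := aux_aut' (by simp; omega)
    (by rw [← Nat.card_eq_fintype_card (α := _ ⧸ H)]; 
        simpa [Subgroup.index] using hidx.symm) θ hθ
  refine ⟨e.symm (QuotientGroup.mk 1), fun σ => ?_⟩
  have h1 := he (φ σ) (e.symm (QuotientGroup.mk 1))
  rw [Equiv.apply_symm_apply] at h1
  have h2 : θ (φ σ) (QuotientGroup.mk 1) = QuotientGroup.mk 1 := by
    change (QuotientGroup.mk (φ σ * 1) : alternatingGroup (Fin (n + 1)) ⧸ H) = QuotientGroup.mk 1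
    rw [eq_comm, QuotientGroup.eq]
    simp [hH]
  rw [h2] at h1
  rw [Equiv.eq_symm_apply]
  exact h1.symm

lemma aux_rep (n : ℕ) (hn : 7 ≤ n)
    (φ : alternatingGroup (Fin n) →* alternatingGroup (Fin (n + 1)))
    (hφ : Function.Injective φ) :
    ∃ E : Perm (Fin (n + 1)), ∀ σ : alternatingGroup (Fin n),
      (∀ i, (φ σ : Perm (Fin (n + 1))) (E (Fin.castSucc i)) =
        E (Fin.castSucc ((σ : Perm (Fin n)) i))) ∧
      (φ σ : Perm (Fin (n + 1))) (E (Fin.last n)) = E (Fin.last n) := by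
  obtain ⟨x, hx⟩ := aux_fix n hn φ hφ
  have hx' : ∀ σ y, (φ σ : Perm (Fin (n + 1))) y ≠ x ↔ y ≠ x := by
    intro σ y
    rw [not_iff_not]
    nth_rewrite 1 [← hx σ]
    exact (φ σ : Perm (Fin (n + 1))).injective.eq_iff
  let P : alternatingGroup (Fin n) →* Perm {y : Fin (n + 1) // y ≠ x} :=
    MonoidHom.mk' (fun σ => (φ σ : Perm (Fin (n + 1))).subtypePerm (hx' σ)) (by
      intro σ τ
      apply Equiv.ext
      intro y
      apply Subtype.ext
      change (φ (σ * τ) : Perm (Fin (n + 1))) y =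
        (φ σ : Perm (Fin (n + 1))) ((φ τ : Perm (Fin (n + 1))) y)
      rw [map_mul]
      rfl)
  have hP : ∀ σ y, (P σ y : Fin (n + 1)) = (φ σ : Perm (Fin (n + 1))) y := fun σ y => rfl
  have hPi : Function.Injective P := by
    intro σ τ h
    apply hφ
    apply Subtype.ext
    ext1 y
    by_cases hy : y = x
    · subst hy; rw [hx, hx]
    · rw [← hP σ ⟨y, hy⟩, ← hP τ ⟨y, hy⟩, h]
  obtain ⟨e, he⟩ := aux_aut' (by simpa using hn) (by simp) P hPi
  let E0 : Fin (n + 1) → Fin (n + 1) := Fin.lastCases x (fun i => (e i : Fin (n + 1)))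
  have E1 : ∀ i, E0 (Fin.castSucc i) = e i := fun i => by simp [E0]
  have E2 : E0 (Fin.last n) = x := by simp [E0]
  have hE : Function.Injective E0 := by
    intro i j
    induction i using Fin.lastCases with
    | last =>
      induction j using Fin.lastCases with
      | last => simp
      | cast j => rw [E1, E2]; intro h; exact absurd h.symm (e j).2
    | cast i =>
      induction j using Fin.lastCases with
      | last => rw [E1, E2]; intro h; exact absurd h (e i).2
      | cast j =>
        rw [E1, E1]; intro h
        rw [e.injective (Subtype.ext h)]
  refine ⟨Equiv.ofBijective E0 (Finite.injective_iff_bijective.1 hE), fun σ => ⟨fun i => ?_, ?_⟩⟩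
  · simp only [Equiv.ofBijective_apply, E1]
    rw [← hP, he]
  · simp only [Equiv.ofBijective_apply, E2, hx]

lemma aux_move (n : ℕ) (hn : 7 ≤ n) (x y : Fin n) : 
    ∃ σ : alternatingGroup (Fin n), (σ : Perm (Fin n)) y ≠ y ∧
      (x ≠ y → (σ : Perm (Fin n)) x = x) := by
  have hex : ∀ s : Finset (Fin n), s.card ≤ 3 → ∃ x, x ∉ s := by
    intro s hs
    by_contra! hh
    have h2 : Finset.univ ⊆ s := fun x _ => hh x
    have := Finset.card_le_card h2
    rw [Finset.card_univ, Fintype.card_fin] at this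
    omega
  obtain ⟨u, hu⟩ := hex {x, y} (Finset.card_le_two.trans (by norm_num))
  obtain ⟨v, hv⟩ := hex {x, y, u} Finset.card_le_three
  simp only [Finset.mem_insert, Finset.mem_singleton, not_or] at hu hv
  refine ⟨⟨swap u y * swap u v, (isThreeCycle_swap_mul_swap_same hu.2
    (fun h => hv.2.2 h.symm) (fun h => hv.2.1 h.symm)).mem_alternatingGroup⟩, ?_, ?_⟩
  · simp only [Perm.mul_apply, swap_apply_def]
    grind
  · intro h
    simp only [Perm.mul_apply, swap_apply_def]
    grind

theorem statement11 (n : ℕ) (hn : 7 ≤ n) :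
    (∀ σ : alternatingGroup (Fin n),
      Equiv.Perm.viaEmbeddingHom Fin.castSuccEmb (σ : Equiv.Perm (Fin n)) ∈
        alternatingGroup (Fin (n + 1))) ∧
    (∀ f : alternatingGroup (Fin n) →* alternatingGroup (Fin (n + 1)),
      (∀ σ : alternatingGroup (Fin n),
        (f σ : Equiv.Perm (Fin (n + 1))) =
          Equiv.Perm.viaEmbeddingHom Fin.castSuccEmb (σ : Equiv.Perm (Fin n))) →
      IsLocalizationHom f) := by
  have hn' : 7 ≤ Fintype.card (Fin n) := by simpa using hn
  have hn1 : 7 ≤ Fintype.card (Fin (n + 1)) := by simp; omega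
  constructor
  · intro σ
    exact aux_sign hn' ((sign.comp (viaEmbeddingHom Fin.castSuccEmb)).comp
      (alternatingGroup (Fin n)).subtype) σ
  intro f hf
  have f1 : ∀ σ i, (f σ : Perm (Fin (n + 1))) (Fin.castSucc i) =
      Fin.castSucc ((σ : Perm (Fin n)) i) := by
    intro σ i
    rw [hf, viaEmbeddingHom_apply]
    exact viaEmbedding_apply _ Fin.castSuccEmb i
  have f2 : ∀ σ, (f σ : Perm (Fin (n + 1))) (Fin.last n) = Fin.last n := by
    intro σ
    rw [hf, viaEmbeddingHom_apply]
    apply viaEmbedding_apply_of_notMem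
    rintro ⟨i, hi⟩
    exact absurd hi (Fin.castSucc_lt_last i).ne
  have finj : Function.Injective f := by
    intro σ τ h
    apply Subtype.ext
    ext1 i
    apply Fin.castSucc_injective
    rw [← f1, ← f1, h]
  have hmove : ∀ x y : Fin (n + 1), y ≠ Fin.last n → 
      ∃ σ, (f σ : Perm (Fin (n + 1))) y ≠ y ∧ (x ≠ y → (f σ : Perm (Fin (n + 1))) x = x) := by
    intro x y hy
    induction y using Fin.lastCases with
    | last => exact absurd rfl hy
    | cast j =>
      induction x using Fin.lastCases with
      | last =>
        obtain ⟨σ, h1, -⟩ := aux_move n hn j j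
        refine ⟨σ, ?_, fun _ => f2 σ⟩
        rw [f1]; exact fun h => h1 (Fin.castSucc_injective _ h)
      | cast i =>
        obtain ⟨σ, h1, h2⟩ := aux_move n hn i j
        refine ⟨σ, ?_, fun h => ?_⟩
        · rw [f1]; exact fun h => h1 (Fin.castSucc_injective _ h)
        · rw [f1, h2 (fun hh => h (by rw [hh]))]
  have hnt : ∃ σ, f σ ≠ 1 := by
    obtain ⟨σ, h, -⟩ := hmove (Fin.castSucc ⟨0, by omega⟩) (Fin.castSucc ⟨0, by omega⟩)
      (Fin.castSucc_lt_last _).ne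
    refine ⟨σ, fun hh => h ?_⟩
    rw [hh]; rfl
  obtain ⟨σ0, hσ0⟩ := hnt
  constructor
  · intro ψ₁ ψ₂ h
    have h' : ∀ σ, ψ₁ (f σ) = ψ₂ (f σ) := fun σ => DFunLike.congr_fun h σ
    rcases aux_triv_or_inj hn1 ψ₁ with i1 | t1
    · rcases aux_triv_or_inj hn1 ψ₂ with i2 | t2
      · obtain ⟨e1, he1⟩ := aux_aut' hn1 rfl ((alternatingGroup (Fin (n + 1))).subtype.comp ψ₁)
          (Subtype.val_injective.comp i1)
        obtain ⟨e2, he2⟩ := aux_aut' hn1 rfl ((alternatingGroup (Fin (n + 1))).subtype.comp ψ₂)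
          (Subtype.val_injective.comp i2)
        have he1' : ∀ g x, (ψ₁ g : Perm (Fin (n + 1))) (e1 x) = e1 ((g : Perm (Fin (n + 1))) x) :=
          he1
        have he2' : ∀ g x, (ψ₂ g : Perm (Fin (n + 1))) (e2 x) = e2 ((g : Perm (Fin (n + 1))) x) :=
          he2
        have hcomm : ∀ σ x, e2.symm (e1 ((f σ : Perm (Fin (n + 1))) x)) =
            (f σ : Perm (Fin (n + 1))) (e2.symm (e1 x)) := by
          intro σ x
          rw [Equiv.symm_apply_eq, ← he2', Equiv.apply_symm_apply, ← he1', h']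
        have hid : ∀ x, e2.symm (e1 x) = x := by
          intro x
          by_contra hne
          by_cases hl : e2.symm (e1 x) = Fin.last n
          · obtain ⟨σ, hσ, -⟩ := hmove x x (fun hh => hne (by rw [hl, hh]))
            have := hcomm σ x
            rw [hl, f2, ← hl] at this
            exact hσ (e1.injective (e2.symm.injective this))
          · obtain ⟨σ, hσ, hσ2⟩ := hmove x _ hl
            have := hcomm σ x
            rw [hσ2 (Ne.symm hne)] at this
            exact hσ this.symm
        have he : ∀ x, e1 x = e2 x := fun x => (Equiv.symm_apply_eq e2).1 (hid x)
        apply MonoidHom.ext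
        intro g
        apply Subtype.ext
        ext1 y
        obtain ⟨x, rfl⟩ := e1.surjective y
        rw [he1', he, he, he2']
      · exfalso
        apply hσ0
        apply i1
        rw [h', t2, map_one]
    · rcases aux_triv_or_inj hn1 ψ₂ with i2 | t2
      · exfalso
        apply hσ0
        apply i2
        rw [← h', t1, map_one]
      · apply MonoidHom.ext
        intro g
        rw [t1, t2]
  · intro φ
    rcases aux_triv_or_inj hn' φ with hi | ht
    · obtain ⟨E, hE⟩ := aux_rep n hn φ hi
      refine ⟨(MulAut.conjNormal E).toMonoidHom, ?_⟩
      apply MonoidHom.ext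
      intro σ
      apply Subtype.ext
      change ((MulAut.conjNormal E (f σ) : alternatingGroup (Fin (n + 1))) : Perm (Fin (n + 1))) = _
      rw [MulAut.conjNormal_apply]
      ext1 y
      obtain ⟨z, rfl⟩ := E.surjective y
      have hz : E⁻¹ (E z) = z := E.symm_apply_apply z
      rw [Perm.mul_apply, Perm.mul_apply, hz]
      induction z using Fin.lastCases with
      | last => rw [f2, (hE σ).2]
      | cast i => rw [f1, (hE σ).1]
    · refine ⟨1, ?_⟩
      apply MonoidHom.ext
      intro σ
      simp [ht]
end

section
/- The inclusion A_5 ↪ A_6, given by extending each even permutation of {1, …, 5} to a permutation of {1, …, 6} fixing the point 6, is a localization. -/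
open Equiv
abbrev px : Perm (Fin 5) := swap 0 1 * swap 1 2
abbrev py : Perm (Fin 5) := swap 2 3 * swap 3 4

lemma three_conj : ∀ X : Perm (Fin 5), X ^ 3 = 1 → X ≠ 1 → ∃ c, c * px * c⁻¹ = X := by
  decide +kernel
lemma pair_conj : ∀ Y : Perm (Fin 5), Y ^ 3 = 1 → Y ≠ 1 → (px * Y) ^ 5 = 1 → px * Y ≠ 1 →
    ∃ c, c * px * c⁻¹ = px ∧ c * py * c⁻¹ = Y := by
  decide +kernel
lemma words : ∀ s : Perm (Fin 5), Perm.sign s = 1 → ∃ a b c d e f : Fin 3,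
    px ^ a.val * py ^ b.val * (px ^ c.val * py ^ d.val) * (px ^ e.val * py ^ f.val) = s := by
  decide +kernel
lemma sixmove : ∀ i j : Fin 6, i ≠ 5 → j ≠ 5 → i ≠ j → ∃ a b : Fin 6,
   Perm.sign (swap j a * swap a b) = 1 ∧ (swap j a * swap a b) 5 = 5 ∧ (swap j a * swap a b) i = i ∧ (swap j a * swap a b) j ≠ j := by
  decide +kernel
lemma trans6 : ∀ i : Fin 6, ∃ a b : Fin 6, Perm.sign (swap 5 a * swap a b) = 1 ∧ (swap 5 a * swap a b) i = 5 := by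
  decide +kernel

lemma sign_via (s : Perm (Fin 5)) :
    Perm.sign (Perm.viaEmbeddingHom (Fin.castSuccEmb : Fin 5 ↪ Fin (5+1)) s) = Perm.sign s := by
  classical
  rw [Perm.viaEmbeddingHom_apply, Perm.viaEmbedding]
  convert Perm.sign_extendDomain s _

lemma via_last (s : Perm (Fin 5)) :
    Perm.viaEmbeddingHom (Fin.castSuccEmb : Fin 5 ↪ Fin (5+1)) s 5 = 5 := by
  rw [Perm.viaEmbeddingHom_apply]
  apply Perm.viaEmbedding_apply_of_notMem
  rintro ⟨i, hi⟩
  revert i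
  decide

abbrev A5 := alternatingGroup (Fin 5)
abbrev A6 := alternatingGroup (Fin (5+1))

instance simple6 : IsSimpleGroup A6 := alternatingGroup.isSimpleGroup (by simp)

lemma card5 : Nat.card A5 = 60 := by
  rw [nat_card_alternatingGroup]; simp; decide
lemma card6 : Nat.card A6 = 360 := by
  rw [nat_card_alternatingGroup]; simp; decide

instance trans_A6 : MulAction.IsPretransitive A6 (Fin (5+1)) := by
  constructor
  intro i j
  obtain ⟨a, b, h1, h2⟩ := trans6 i
  obtain ⟨c, d, h3, h4⟩ := trans6 j
  let g : A6 := ⟨_, Perm.mem_alternatingGroup.2 h1⟩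
  let h : A6 := ⟨_, Perm.mem_alternatingGroup.2 h3⟩
  refine ⟨h⁻¹ * g, ?_⟩
  rw [mul_smul, inv_smul_eq_iff]
  exact h2.trans h4.symm

/-- dichotomy for homs out of a simple group -/
lemma inj_or_triv {G H : Type*} [Group G] [Group H] [IsSimpleGroup G] (f : G →* H) :
    Function.Injective f ∨ f = 1 := by
  rcases (inferInstance : f.ker.Normal).eq_bot_or_eq_top with h | h
  · exact Or.inl ((MonoidHom.ker_eq_bot_iff f).1 h)
  · exact Or.inr ((MonoidHom.ker_eq_top_iff).1 h)

lemma range_f (f : A5 →* A6)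
    (hf : ∀ σ : A5, (f σ : Perm (Fin (5 + 1))) = Perm.viaEmbeddingHom Fin.castSuccEmb (σ : Perm (Fin 5)))
    (hinj : Function.Injective f) :
    f.range = MulAction.stabilizer A6 (5 : Fin (5+1)) := by
  apply Subgroup.eq_of_le_of_card_ge
  · rintro _ ⟨s, rfl⟩
    rw [MulAction.mem_stabilizer_iff]
    change (f s : Perm (Fin (5 + 1))) 5 = 5
    rw [hf, via_last]
  · have h1 : Nat.card f.range = 60 := by
      rw [← card5]
      exact (Nat.card_congr (MonoidHom.ofInjective hinj).toEquiv).symm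
    have h2 := Subgroup.card_mul_index (MulAction.stabilizer A6 (5 : Fin (5+1)))
    rw [MulAction.index_stabilizer_of_transitive, card6, Nat.card_eq_fintype_card (α := Fin (5+1)), Fintype.card_fin] at h2
    omega

lemma f_inj (f : A5 →* A6)
    (hf : ∀ σ : A5, (f σ : Perm (Fin (5 + 1))) = Perm.viaEmbeddingHom Fin.castSuccEmb (σ : Perm (Fin 5))) :
    Function.Injective f := by
  intro s t h
  apply Subtype.ext
  apply Perm.viaEmbeddingHom_injective (Fin.castSuccEmb : Fin 5 ↪ Fin (5+1))
  rw [← hf, ← hf, h]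

/-- automorphisms of A5 are conjugations by elements of S5 -/
lemma aut5 (β : A5 →* A5) (hβ : Function.Injective β) :
    ∃ c : Perm (Fin 5), ∀ s : A5, (β s : Perm (Fin 5)) = c * s * c⁻¹ := by
  let x : A5 := ⟨px, Perm.mem_alternatingGroup.2 (by decide)⟩
  let y : A5 := ⟨py, Perm.mem_alternatingGroup.2 (by decide)⟩
  have e1 : ∀ g : A5, g ≠ 1 → (β g : Perm (Fin 5)) ≠ 1 := by
    intro g hg h
    apply hg
    apply hβ
    rw [map_one]
    exact Subtype.ext h
  have e2 : ∀ (g : A5) (n : ℕ), g ^ n = 1 → (β g : Perm (Fin 5)) ^ n = 1 := by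
    intro g n h
    have := congrArg β h
    rw [map_pow, map_one] at this
    exact congrArg Subtype.val this
  obtain ⟨c, hc⟩ := three_conj (β x) (e2 x 3 (by decide)) (e1 x (by decide))
  have key : px * (c⁻¹ * (β y : Perm (Fin 5)) * c) = c⁻¹ * (β (x * y) : Perm (Fin 5)) * c⁻¹⁻¹ := by
    rw [map_mul, Subgroup.coe_mul, ← hc]; group
  have key' : c⁻¹ * (β y : Perm (Fin 5)) * c = c⁻¹ * (β y : Perm (Fin 5)) * c⁻¹⁻¹ := by simp
  obtain ⟨d, hd1, hd2⟩ := pair_conj (c⁻¹ * (β y : Perm (Fin 5)) * c)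
    (by rw [key', conj_pow, e2 y 3 (by decide)]; group)
    (by rw [key', Ne, conj_eq_one_iff]; exact e1 y (by decide))
    (by rw [key, conj_pow, e2 (x * y) 5 (by decide)]; group)
    (by rw [key, Ne, conj_eq_one_iff]; exact e1 (x * y) (by decide))
  refine ⟨c * d, ?_⟩
  have hx : (β x : Perm (Fin 5)) = MulAut.conj (c * d) px := by
    rw [MulAut.conj_apply, ← hc]
    conv_lhs => rw [← hd1]
    group
  have hy : (β y : Perm (Fin 5)) = MulAut.conj (c * d) py := by
    have : (β y : Perm (Fin 5)) = c * (d * py * d⁻¹) * c⁻¹ := by rw [hd2]; group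
    rw [MulAut.conj_apply, this]
    group
  intro s
  obtain ⟨a, b, a', b', a'', b'', hw⟩ := words s (Perm.mem_alternatingGroup.1 s.2)
  have hs : s = x ^ a.val * y ^ b.val * (x ^ a'.val * y ^ b'.val) * (x ^ a''.val * y ^ b''.val) :=
    Subtype.ext hw.symm
  rw [← MulAut.conj_apply, ← hw, hs]
  simp only [map_mul, map_pow, Subgroup.coe_mul, Subgroup.coe_pow, hx, hy]

lemma exists_alpha (K : Subgroup A6) (hK : K.index = 6) :
    ∃ α : A6 →* A6, Function.Bijective α ∧ ∀ k ∈ K, (α k : Perm (Fin (5+1))) 5 = 5 := by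
  have hc : Nat.card (A6 ⧸ K) = 6 := hK
  let e0 : A6 ⧸ K ≃ Fin (5+1) := Finite.equivFinOfCardEq hc
  let e : A6 ⧸ K ≃ Fin (5+1) := e0.trans (swap (e0 (QuotientGroup.mk 1)) 5)
  have he : e (QuotientGroup.mk 1) = 5 := by simp [e]
  let ρ : A6 →* Perm (Fin (5+1)) :=
    (permCongrHom e).toMonoidHom.comp (MulAction.toPermHom A6 (A6 ⧸ K))
  have hρ : ∀ g q, ρ g (e q) = e (g • q) := by
    intro g q
    simp [ρ, permCongrHom]
  have hsign : ∀ g, ρ g ∈ alternatingGroup (Fin (5+1)) := by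
    intro g
    rcases inj_or_triv (Perm.sign.comp ρ) with h | h
    · exfalso
      have := Nat.card_le_card_of_injective _ h
      rw [card6] at this
      simp at this
    · exact Perm.mem_alternatingGroup.2 (DFunLike.congr_fun h g)
  let α : A6 →* A6 := ρ.codRestrict _ hsign
  have hα : ∀ g, (α g : Perm (Fin (5+1))) = ρ g := fun g => rfl
  refine ⟨α, ?_, ?_⟩
  · rcases inj_or_triv α with h | h
    · exact Finite.injective_iff_bijective.1 h
    · exfalso
      have hT : K = ⊤ := by
        rw [eq_top_iff]
        intro g _
        have h1 : ρ g = 1 := by rw [← hα, h]; rfl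
        have h2 := hρ g (QuotientGroup.mk 1)
        rw [h1] at h2
        have h3 := e.injective h2
        have h4 : (QuotientGroup.mk 1 : A6 ⧸ K) = QuotientGroup.mk (g * 1) := h3
        rw [QuotientGroup.eq] at h4
        simpa using h4
      rw [hT] at hK
      simp at hK
  · intro k hk
    rw [hα]
    have h2 := hρ k (QuotientGroup.mk 1)
    rw [he] at h2
    rw [h2, ← he]
    congr 1
    change (QuotientGroup.mk (k * 1) : A6 ⧸ K) = QuotientGroup.mk 1
    rw [QuotientGroup.eq]
    simpa using hk

lemma uniq_aux (θ : A6 →* A6) (hinj : Function.Injective θ)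
    (hθ : ∀ k : A6, (k : Perm (Fin (5+1))) 5 = 5 → θ k = k) (g : A6) : θ g = g := by
  have h5 : ∀ g : A6, (θ g : Perm (Fin (5+1))) 5 = (g : Perm (Fin (5+1))) 5 := by
    intro g
    by_cases h1 : (g : Perm (Fin (5+1))) 5 = 5
    · rw [hθ g h1]
    by_cases h2 : (θ g : Perm (Fin (5+1))) 5 = 5
    · rw [hinj (hθ _ h2)]
    by_contra h3
    obtain ⟨a, b, hs, hk5, hki, hkj⟩ := sixmove _ _ h1 h2 (Ne.symm h3)
    set k0 := swap ((θ g : Perm (Fin (5+1))) 5) a * swap a b with hk0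
    let k : A6 := ⟨k0, Perm.mem_alternatingGroup.2 hs⟩
    have hk : θ k = k := hθ k hk5
    have hk' : θ (g⁻¹ * k * g) = g⁻¹ * k * g := by
      apply hθ
      change (g : Perm (Fin (5+1)))⁻¹ (k0 ((g : Perm (Fin (5+1))) 5)) = 5
      rw [hki]; simp
    rw [map_mul, map_mul, map_inv, hk] at hk'
    have h6 : k * θ g = θ g * (g⁻¹ * k * g) := by rw [← hk']; group
    apply hkj
    have h7 := congrArg (fun t : A6 => (t : Perm (Fin (5+1))) 5) h6
    change k0 ((θ g : Perm (Fin (5+1))) 5) =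
      (θ g : Perm (Fin (5+1))) ((g : Perm (Fin (5+1)))⁻¹ (k0 ((g : Perm (Fin (5+1))) 5))) at h7
    rw [hki] at h7
    simpa using h7
  apply Subtype.ext
  ext1 j
  obtain ⟨h, hh⟩ := MulAction.exists_smul_eq A6 (5 : Fin (5+1)) j
  have hh' : (h : Perm (Fin (5+1))) 5 = j := hh
  have h8 := h5 (g * h)
  rw [map_mul] at h8
  change (θ g : Perm (Fin (5+1))) ((θ h : Perm (Fin (5+1))) 5) = (g : Perm (Fin (5+1))) ((h : Perm (Fin (5+1))) 5) at h8
  rwa [h5, hh'] at h8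

/-- The inclusion `A_5 ↪ A_6` (extending an even
permutation of `Fin 5` to `Fin (n+1)` by fixing the extra point) is a localization. -/
theorem statement12 :
    (∀ σ : alternatingGroup (Fin 5),
      Equiv.Perm.viaEmbeddingHom Fin.castSuccEmb (σ : Equiv.Perm (Fin 5)) ∈
        alternatingGroup (Fin (5 + 1))) ∧
    (∀ f : alternatingGroup (Fin 5) →* alternatingGroup (Fin (5 + 1)),
      (∀ σ : alternatingGroup (Fin 5),
        (f σ : Equiv.Perm (Fin (5 + 1))) =
          Equiv.Perm.viaEmbeddingHom Fin.castSuccEmb (σ : Equiv.Perm (Fin 5))) →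
      IsLocalizationHom f) := by
  refine ⟨fun σ => ?_, fun f hf => ?_⟩
  · rw [Perm.mem_alternatingGroup, sign_via]
    exact Perm.mem_alternatingGroup.1 σ.2
  have hfi := f_inj f hf
  have hr := range_f f hf hfi
  have hfix : ∀ k : A6, (k : Perm (Fin (5+1))) 5 = 5 → ∃ s, f s = k := by
    intro k hk
    have : k ∈ MulAction.stabilizer A6 (5 : Fin (5+1)) := hk
    rw [← hr] at this
    exact this
  constructor
  · intro ψ₁ ψ₂ h
    have h' : ∀ s, ψ₁ (f s) = ψ₂ (f s) := fun s => DFunLike.congr_fun h s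
    have triv : ∀ ψ ψ' : A6 →* A6, (∀ s, ψ (f s) = ψ' (f s)) → ψ = 1 → ψ' = 1 := by
      intro ψ ψ' hh h1
      rcases inj_or_triv ψ' with h2 | h2
      · exfalso
        obtain ⟨s, hs⟩ := exists_ne (1 : A5)
        apply hs
        apply hfi
        apply h2
        rw [← hh, h1]; simp
      · exact h2
    rcases inj_or_triv ψ₁ with h1 | h1
    · rcases inj_or_triv ψ₂ with h2 | h2
      · let e : A6 ≃* A6 := MulEquiv.ofBijective ψ₂ (Finite.injective_iff_bijective.1 h2)
        ext1 g
        have := uniq_aux (e.symm.toMonoidHom.comp ψ₁) (e.symm.injective.comp h1) (by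
          intro k hk
          obtain ⟨s, rfl⟩ := hfix k hk
          change e.symm (ψ₁ (f s)) = f s
          rw [h' s, MulEquiv.symm_apply_eq]
          rfl) g
        change e.symm (ψ₁ g) = g at this
        rw [MulEquiv.symm_apply_eq] at this
        exact this
      · rw [h2, triv ψ₂ ψ₁ (fun s => (h' s).symm) h2]
    · rw [h1, triv ψ₁ ψ₂ h' h1]
  · intro g
    rcases inj_or_triv g with hg | hg
    · have hK : g.range.index = 6 := by
        have h1 : Nat.card g.range = 60 := by
          rw [← card5]
          exact (Nat.card_congr (MonoidHom.ofInjective hg).toEquiv).symm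
        have h2 := Subgroup.card_mul_index g.range
        rw [h1, card6] at h2
        omega
      obtain ⟨α, hα, hα5⟩ := exists_alpha g.range hK
      have hmem : ∀ s, α (g s) ∈ f.range := fun s => hfix _ (hα5 _ ⟨s, rfl⟩)
      let β : A5 →* A5 := (MonoidHom.ofInjective hfi).symm.toMonoidHom.comp
        ((α.comp g).codRestrict f.range hmem)
      have hβ : ∀ s, f (β s) = α (g s) := by
        intro s
        have := (MonoidHom.ofInjective hfi).apply_symm_apply ⟨α (g s), hmem s⟩
        exact congrArg Subtype.val this
      obtain ⟨c, hc⟩ := aut5 β (by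
        intro s t hst
        apply hg
        apply hα.1
        rw [← hβ, ← hβ, hst])
      let e : A6 ≃* A6 := MulEquiv.ofBijective α hα
      let c' : Perm (Fin (5+1)) := Perm.viaEmbeddingHom Fin.castSuccEmb c
      let κ : MulAut A6 := MulAut.conjNormal c'
      refine ⟨e.symm.toMonoidHom.comp κ.toMonoidHom, ?_⟩
      ext1 s
      change e.symm (κ (f s)) = g s
      rw [MulEquiv.symm_apply_eq]
      change κ (f s) = α (g s)
      rw [← hβ]
      apply Subtype.ext
      rw [hf, hc, map_mul, map_mul, map_inv, ← hf]
      exact MulAut.conjNormal_apply c' (f s)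
    · refine ⟨1, ?_⟩
      rw [hg]
      rfl
end

section
/- The inclusion A_6 ↪ A_7, given by extending each even permutation of {1, …, 6} to a permutation of {1, …, 7} fixing the point 7, is NOT a localization; that is, the precomposition map Hom(A_7, A_7) → Hom(A_6, A_7) is not a bijection. -/
open Equiv Equiv.Perm

/-- colour tables of the six one-factorizations of K_6 -/
def colT : Fin 6 → Fin 6 → Fin 6 → Fin 6 :=
![![![5, 0, 1, 2, 3, 4], ![0, 5, 4, 3, 1, 2], ![1, 4, 5, 0, 2, 3], ![2, 3, 0, 5, 4, 1], ![3, 1, 2, 4, 5, 0], ![4, 2, 3, 1, 0, 5]],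
![![5, 0, 1, 2, 3, 4], ![0, 5, 3, 4, 2, 1], ![1, 3, 5, 0, 4, 2], ![2, 4, 0, 5, 1, 3], ![3, 2, 4, 1, 5, 0], ![4, 1, 2, 3, 0, 5]],
![![5, 0, 1, 2, 3, 4], ![0, 5, 4, 1, 2, 3], ![1, 4, 5, 3, 0, 2], ![2, 1, 3, 5, 4, 0], ![3, 2, 0, 4, 5, 1], ![4, 3, 2, 0, 1, 5]],
![![5, 0, 1, 2, 3, 4], ![0, 5, 2, 3, 4, 1], ![1, 2, 5, 4, 0, 3], ![2, 3, 4, 5, 1, 0], ![3, 4, 0, 1, 5, 2], ![4, 1, 3, 0, 2, 5]],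
![![5, 0, 1, 2, 3, 4], ![0, 5, 3, 1, 4, 2], ![1, 3, 5, 4, 2, 0], ![2, 1, 4, 5, 0, 3], ![3, 4, 2, 0, 5, 1], ![4, 2, 0, 3, 1, 5]],
![![5, 0, 1, 2, 3, 4], ![0, 5, 2, 4, 1, 3], ![1, 2, 5, 3, 4, 0], ![2, 4, 3, 5, 0, 1], ![3, 1, 4, 0, 5, 2], ![4, 3, 0, 1, 2, 5]]]

def Comp6 (g p : Perm (Fin 6)) : Prop :=
  ∀ i a b c d, colT i a b = colT i c d ↔
    colT (p i) (g a) (g b) = colT (p i) (g c) (g d)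

lemma comp6_of (g p : Perm (Fin 6)) (q : Fin 6 → Fin 6 → Fin 6)
    (hq : ∀ i k l, q i k = q i l → k = l)
    (h : ∀ i a b, colT (p i) (g a) (g b) = q i (colT i a b)) : Comp6 g p := by
  intro i a b c d
  rw [h, h]
  exact ⟨fun e => by rw [e], fun e => hq _ _ _ e⟩

lemma comp6_mul {g p g' p' : Perm (Fin 6)} (h : Comp6 g p) (h' : Comp6 g' p') :
    Comp6 (g * g') (p * p') := by
  intro i a b c d
  rw [h' i a b c d, h (p' i)]
  rfl

lemma comp6_one : Comp6 1 1 := fun _ _ _ _ _ => Iff.rfl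

lemma comp6_inv {g p : Perm (Fin 6)} (h : Comp6 g p) : Comp6 g⁻¹ p⁻¹ := by
  intro i a b c d
  have := h (p⁻¹ i) (g⁻¹ a) (g⁻¹ b) (g⁻¹ c) (g⁻¹ d)
  have e : ∀ (r : Perm (Fin 6)) x, r (r⁻¹ x) = x := fun r x => r.apply_symm_apply x
  simp only [e] at this
  exact this.symm

lemma colT_inj : ∀ i j : Fin 6, i ≠ j →
    ∃ b d, colT i 0 1 = colT i b d ∧ colT j 0 1 ≠ colT j b d ∨
      colT i 0 2 = colT i b d ∧ colT j 0 2 ≠ colT j b d := by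
  decide +kernel

lemma comp6_unique {g p p' : Perm (Fin 6)} (h : Comp6 g p) (h' : Comp6 g p') : p = p' := by
  have key : Comp6 1 (p⁻¹ * p') := by
    have := comp6_mul (comp6_inv h) h'
    simpa using this
  have : p⁻¹ * p' = 1 := by
    ext1 i
    by_contra hne
    obtain ⟨b, d, h1 | h1⟩ := colT_inj i ((p⁻¹ * p') i) (fun e => hne e.symm)
    · exact h1.2 ((key i 0 1 b d).1 h1.1)
    · exact h1.2 ((key i 0 2 b d).1 h1.1)
  exact (inv_mul_eq_one.1 this)

def K6 : Subgroup (Perm (Fin 6)) where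
  carrier := {g | ∃ p, Perm.sign p = Perm.sign g ∧ Comp6 g p}
  mul_mem' := by
    rintro a b ⟨p, hp, h⟩ ⟨q, hq, h'⟩
    exact ⟨p * q, by rw [map_mul, map_mul, hp, hq], comp6_mul h h'⟩
  one_mem' := ⟨1, rfl, comp6_one⟩
  inv_mem' := by
    rintro a ⟨p, hp, h⟩
    exact ⟨p⁻¹, by rw [map_inv, map_inv, hp], comp6_inv h⟩

def mkP {n : ℕ} (f g : Fin n → Fin n) (h : ∀ i, g (f i) = i) (h' : ∀ i, f (g i) = i) :
    Perm (Fin n) := ⟨f, g, h, h'⟩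

lemma K6_top : K6 = ⊤ := by
  rw [eq_top_iff, ← closure_cycle_adjacent_swap (σ := finRotate 6)
    (isCycle_finRotate (n := 4)) (support_finRotate (n := 4)) 0, Subgroup.closure_le]
  rintro g (rfl | rfl)
  · refine ⟨mkP ![0, 2, 1, 4, 5, 3] ![0, 2, 1, 5, 3, 4] (by decide) (by decide),
      by decide +kernel, comp6_of _ _
      ![![4, 3, 1, 2, 0, 5], ![4, 1, 2, 3, 0, 5], ![3, 4, 2, 1, 0, 5], ![3, 1, 4, 2, 0, 5],
        ![2, 4, 1, 3, 0, 5], ![2, 3, 4, 1, 0, 5]] (by decide +kernel) (by decide +kernel)⟩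
  · refine ⟨mkP ![1, 0, 3, 2, 5, 4] ![1, 0, 3, 2, 5, 4] (by decide) (by decide),
      by decide +kernel, comp6_of _ _
      ![![0, 3, 4, 2, 1, 5], ![0, 4, 3, 1, 2, 5], ![0, 2, 3, 4, 1, 5], ![0, 4, 1, 2, 3, 5],
        ![0, 2, 4, 1, 3, 5], ![0, 3, 1, 4, 2, 5]] (by decide +kernel) (by decide +kernel)⟩

lemma ex_outer : ∃ α : alternatingGroup (Fin 6) →* alternatingGroup (Fin 6),
    ∀ g : alternatingGroup (Fin 6), Comp6 (g : Perm (Fin 6)) (α g : Perm (Fin 6)) := by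
  have h : ∀ g : alternatingGroup (Fin 6), ∃ p : alternatingGroup (Fin 6),
      Comp6 (g : Perm (Fin 6)) (p : Perm (Fin 6)) := by
    intro g
    have hg : (g : Perm (Fin 6)) ∈ K6 := by rw [K6_top]; trivial
    obtain ⟨p, hp, hc⟩ := hg
    refine ⟨⟨p, ?_⟩, hc⟩
    rw [mem_alternatingGroup, hp]
    exact mem_alternatingGroup.1 g.2
  choose α hα using h
  exact ⟨MonoidHom.mk' α fun a b =>
    Subtype.ext (comp6_unique (hα (a * b)) (comp6_mul (hα a) (hα b))), hα⟩

lemma via_cast (σ : Perm (Fin 6)) (i : Fin 6) :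
    viaEmbeddingHom Fin.castSuccEmb σ i.castSucc = (σ i).castSucc :=
  viaEmbedding_apply σ Fin.castSuccEmb i

lemma via_last_s13 (σ : Perm (Fin 6)) :
    viaEmbeddingHom Fin.castSuccEmb σ (Fin.last 6) = Fin.last 6 :=
  viaEmbedding_apply_of_notMem σ Fin.castSuccEmb _ (by
    rintro ⟨x, hx⟩
    exact (Fin.castSucc_lt_last x).ne hx)

lemma via_eq (σ : Perm (Fin 6)) (τ : Perm (Fin 7))
    (h : ∀ i : Fin 6, τ i.castSucc = (σ i).castSucc) (h' : τ (Fin.last 6) = Fin.last 6) :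
    viaEmbeddingHom Fin.castSuccEmb σ = τ := by
  ext1 i
  refine Fin.lastCases ?_ (fun i => ?_) i
  · rw [h']; exact via_last_s13 σ
  · rw [h]; exact via_cast σ i

lemma via_sign (σ : Perm (Fin 6)) :
    Perm.sign (viaEmbeddingHom Fin.castSuccEmb σ : Perm (Fin (6 + 1))) = Perm.sign σ := by
  rw [viaEmbeddingHom_apply, viaEmbedding, sign_extendDomain]

def d7 : Perm (Fin 7) :=
  mkP ![3, 5, 1, 4, 0, 2, 6] ![4, 2, 5, 0, 3, 1, 6] (by decide) (by decide)

lemma cent_aux : ∀ a b c : Fin 7,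
    (∀ i, ![a, b, d7 (d7 b), d7 a, d7 (d7 a), d7 b, c]
      (![a, b, d7 (d7 b), d7 a, d7 (d7 a), d7 b, c] i) = i) →
    (a = 0 ∧ b = 1 ∧ c = 6) ∨ (a = 1 ∧ b = 0 ∧ c = 6) ∨ (a = 5 ∧ b = 4 ∧ c = 6) ∨
      (a = 2 ∧ b = 3 ∧ c = 6) := by
  decide +kernel

lemma cent (x : Perm (Fin 7)) (hx : ∀ i, x (x i) = i) (hd : ∀ i, x (d7 i) = d7 (x i))
    (hs : Perm.sign x = 1) : x = 1 := by
  have hf : (x : Fin 7 → Fin 7) =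
      ![x 0, x 1, d7 (d7 (x 1)), d7 (x 0), d7 (d7 (x 0)), d7 (x 1), x 6] := by
    funext i
    fin_cases i
    · rfl
    · rfl
    · exact (hd 5).trans (congrArg d7 (hd 1))
    · exact hd 0
    · exact (hd 3).trans (congrArg d7 (hd 0))
    · exact hd 1
    · rfl
  have hx' := hx
  have key := cent_aux (x 0) (x 1) (x 6) (by rw [← hf]; exact hx)
  rcases key with ⟨h0, h1, h6⟩ | ⟨h0, h1, h6⟩ | ⟨h0, h1, h6⟩ | ⟨h0, h1, h6⟩ <;>
    rw [h0, h1, h6] at hf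
  · ext1 i
    rw [hf]; revert i; decide
  · exfalso
    have e : x = swap 0 1 * swap 3 5 * swap 4 2 := by
      ext1 i; rw [hf]; revert i; decide
    rw [e] at hs; revert hs; decide +kernel
  · exfalso
    have e : x = swap 0 5 * swap 3 2 * swap 4 1 := by
      ext1 i; rw [hf]; revert i; decide
    rw [e] at hs; revert hs; decide +kernel
  · exfalso
    have e : x = swap 0 2 * swap 3 1 * swap 4 5 := by
      ext1 i; rw [hf]; revert i; decide
    rw [e] at hs; revert hs; decide +kernel

def s3 : alternatingGroup (Fin 6) :=
  ⟨mkP ![1, 2, 0, 3, 4, 5] ![2, 0, 1, 3, 4, 5] (by decide) (by decide), by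
    rw [mem_alternatingGroup]; decide +kernel⟩

def s22 : alternatingGroup (Fin 6) :=
  ⟨mkP ![1, 0, 3, 2, 4, 5] ![1, 0, 3, 2, 4, 5] (by decide) (by decide), by
    rw [mem_alternatingGroup]; decide +kernel⟩

def p3 : Perm (Fin 6) :=
  mkP ![3, 5, 1, 4, 0, 2] ![4, 2, 5, 0, 3, 1] (by decide) (by decide)

def p22 : Perm (Fin 6) :=
  mkP ![0, 1, 4, 5, 2, 3] ![0, 1, 4, 5, 2, 3] (by decide) (by decide)

lemma comp_s3 : Comp6 (s3 : Perm (Fin 6)) p3 :=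
  comp6_of _ _ ![![2, 0, 3, 4, 1, 5], ![2, 0, 4, 1, 3, 5], ![3, 0, 4, 2, 1, 5],
    ![3, 0, 1, 4, 2, 5], ![4, 0, 3, 1, 2, 5], ![4, 0, 1, 2, 3, 5]]
    (by decide +kernel) (by decide +kernel)

lemma comp_s22 : Comp6 (s22 : Perm (Fin 6)) p22 :=
  comp6_of _ _ ![![0, 3, 4, 1, 2, 5], ![0, 4, 3, 2, 1, 5], ![0, 1, 3, 4, 2, 5],
    ![0, 4, 2, 1, 3, 5], ![0, 1, 4, 2, 3, 5], ![0, 3, 2, 4, 1, 5]]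
    (by decide +kernel) (by decide +kernel)

def u7 : alternatingGroup (Fin (6 + 1)) :=
  ⟨swap 3 4 * swap 5 6, by rw [mem_alternatingGroup]; decide +kernel⟩

def w7 : alternatingGroup (Fin (6 + 1)) :=
  ⟨mkP ![4, 5, 6, 0, 1, 2, 3] ![3, 4, 5, 6, 0, 1, 2] (by decide) (by decide), by
    rw [mem_alternatingGroup]; decide +kernel⟩

/-- The inclusion `A_6 ↪ A_7` (extending an even permutation of `Fin 6`
to `Fin 7` by fixing the extra point) is NOT a localization. -/
theorem statement13 :
    (∀ σ : alternatingGroup (Fin 6),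
      Equiv.Perm.viaEmbeddingHom Fin.castSuccEmb (σ : Equiv.Perm (Fin 6)) ∈
        alternatingGroup (Fin (6 + 1))) ∧
    (∀ f : alternatingGroup (Fin 6) →* alternatingGroup (Fin (6 + 1)),
      (∀ σ : alternatingGroup (Fin 6),
        (f σ : Equiv.Perm (Fin (6 + 1))) =
          Equiv.Perm.viaEmbeddingHom Fin.castSuccEmb (σ : Equiv.Perm (Fin 6))) →
      ¬ IsLocalizationHom f) := by
  refine ⟨fun σ => ?_, fun f hf hloc => ?_⟩
  · rw [mem_alternatingGroup, via_sign]
    exact mem_alternatingGroup.1 σ.2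
  · obtain ⟨α, hα⟩ := ex_outer
    obtain ⟨ψ, hψ⟩ := hloc.2 (f.comp α)
    have hψ' : ∀ g, ψ (f g) = f (α g) := fun g => DFunLike.congr_fun hψ g
    have a3 : (α s3 : Perm (Fin 6)) = p3 := comp6_unique (hα s3) comp_s3
    have a22 : (α s22 : Perm (Fin 6)) = p22 := comp6_unique (hα s22) comp_s22
    have hd : (ψ (f s3) : Perm (Fin (6 + 1))) = d7 := by
      rw [hψ', hf, a3]
      exact via_eq _ _ (by decide) (by decide)
    have hs3 : (f s3 : Perm (Fin (6 + 1))) = swap 0 1 * swap 1 2 := by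
      rw [hf]
      exact via_eq _ _ (by decide) (by decide)
    have hs22 : (f s22 : Perm (Fin (6 + 1))) = swap 0 1 * swap 2 3 := by
      rw [hf]
      exact via_eq _ _ (by decide) (by decide)
    have hcomm : u7 * f s3 = f s3 * u7 := by
      apply Subtype.ext
      rw [Subgroup.coe_mul, Subgroup.coe_mul, hs3]
      decide +kernel
    have huu : u7 * u7 = 1 := by
      apply Subtype.ext
      decide +kernel
    have hconj : f s22 * w7 = w7 * u7 := by
      apply Subtype.ext
      rw [Subgroup.coe_mul, Subgroup.coe_mul, hs22]
      decide +kernel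
    have hu : ψ u7 = 1 := by
      apply Subtype.ext
      apply cent
      · intro i
        have := congrArg ψ huu
        rw [map_mul, map_one] at this
        exact DFunLike.congr_fun (congrArg Subtype.val this) i
      · intro i
        have := congrArg ψ hcomm
        rw [map_mul, map_mul] at this
        have := DFunLike.congr_fun (congrArg Subtype.val this) i
        rw [Subgroup.coe_mul, Subgroup.coe_mul, hd] at this
        exact this
      · exact mem_alternatingGroup.1 (ψ u7).2
    have h1 : f (α s22) = 1 := by
      have := congrArg ψ hconj
      rw [map_mul, map_mul, hu, mul_one, hψ'] at this
      exact mul_eq_right.1 this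
    have h2 := hf (α s22)
    rw [h1, a22] at h2
    have h3 := (via_cast p22 2).symm.trans (DFunLike.congr_fun h2.symm (Fin.castSucc 2))
    revert h3
    decide
end

section
/- Let G₁ and G₂ be finite groups of coprime orders. Then the first projection π : G₁ × G₂ → G₁ is a localization; that is, the precomposition map Hom(G₁, G₁) → Hom(G₁ × G₂, G₁), ψ ↦ ψ ∘ π, is a bijection. -/
/-- If `G₁` and `G₂` are finite groups of coprime orders, then the
first projection `G₁ × G₂ → G₁` is a localization. -/
theorem statement14 (G₁ G₂ : Type*) [Group G₁] [Group G₂] [Finite G₁] [Finite G₂]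
    (hco : Nat.Coprime (Nat.card G₁) (Nat.card G₂)) :
    IsLocalizationHom (MonoidHom.fst G₁ G₂) := by
  constructor
  · intro ψ₁ ψ₂ h
    ext x
    have := DFunLike.congr_fun h ((x, 1) : G₁ × G₂)
    simpa using this
  · intro f
    refine ⟨f.comp (MonoidHom.inl G₁ G₂), ?_⟩
    ext p
    obtain ⟨x, y⟩ := p
    have hy : f (1, y) = 1 := by
      rw [← orderOf_eq_one_iff]
      apply Nat.eq_one_of_dvd_coprimes hco
      · exact orderOf_dvd_natCard _
      · apply orderOf_dvd_of_pow_eq_one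
        rw [← map_pow, Prod.pow_mk, one_pow, pow_card_eq_one', ← Prod.one_eq_mk, map_one]
    have hxy : ((x, y) : G₁ × G₂) = (x, 1) * (1, y) := by simp
    have h2 : f (x, y) = f (x, 1) := by rw [hxy, map_mul, hy, mul_one]
    simpa using h2.symm
end

section
/- Let G be a finite simple group and H a nontrivial subgroup of G such that the inclusion H ↪ G is a localization. Then for every subgroup H' of G isomorphic (as a group) to H, the inclusion H' ↪ G is also a localization. -/
/-- If `G` is a finite simple group and the inclusion of a nontrivial
subgroup `H` is a localization, then for every subgroup `H'` of `G` isomorphic to `H`,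
the inclusion `H' ↪ G` is also a localization. -/
theorem statement15 (G : Type*) [Group G] [Finite G] [IsSimpleGroup G]
    (H : Subgroup G) (hH : H ≠ ⊥)
    (hloc : IsLocalizationHom H.subtype) :
    ∀ H' : Subgroup G, Nonempty (H' ≃* H) → IsLocalizationHom H'.subtype := by
  rintro H' ⟨e⟩
  obtain ⟨a, ha⟩ := hloc.2 (H'.subtype.comp e.symm.toMonoidHom)
  have ha' : ∀ x : H, a x = (e.symm x : G) := fun x => DFunLike.congr_fun ha x
  have hinj : Function.Injective a := by
    rw [← MonoidHom.ker_eq_bot_iff]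
    rcases (inferInstance : a.ker.Normal).eq_bot_or_eq_top with h | h
    · exact h
    · exfalso
      apply hH
      rw [Subgroup.eq_bot_iff_forall]
      intro x hx
      have h1 : a x = 1 := by
        rw [← MonoidHom.mem_ker, h]
        trivial
      have h2 := ha' ⟨x, hx⟩
      simp only [h1] at h2
      have h3 : e.symm ⟨x, hx⟩ = 1 := Subtype.ext h2.symm
      have h4 : (⟨x, hx⟩ : H) = 1 := by simpa using h3
      exact congrArg Subtype.val h4
  have hbij : Function.Bijective a := Finite.injective_iff_bijective.mp hinj
  let A : G ≃* G := MulEquiv.ofBijective a hbij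
  have hA : ∀ x : H, A x = (e.symm x : G) := ha'
  constructor
  · intro f g hfg
    have hfg' : ∀ x : H', f x = g x := fun x => DFunLike.congr_fun hfg x
    have h1 : f.comp A.toMonoidHom = g.comp A.toMonoidHom := by
      apply hloc.1
      ext x
      change f (A x) = g (A x)
      rw [hA]
      exact hfg' _
    ext y
    have h2 := DFunLike.congr_fun h1 (A.symm y)
    simpa using h2
  · intro f
    obtain ⟨g, hg⟩ := hloc.2 (f.comp e.symm.toMonoidHom)
    have hg' : ∀ x : H, g x = f (e.symm x) := fun x => DFunLike.congr_fun hg x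
    refine ⟨g.comp A.symm.toMonoidHom, ?_⟩
    ext x
    change g (A.symm x) = f x
    have h1 : A.symm (x : G) = (e x : G) := by
      rw [MulEquiv.symm_apply_eq, hA]
      simp
    rw [h1, hg']
    simp
end

section
/- Let H and G be non-abelian finite simple groups and i : H → G an injective group homomorphism. Then i is a localization if and only if the map from Aut(G) to the set of nontrivial group homomorphisms H → G, sending an automorphism α to the composite α ∘ i, is a bijection. -/
/-- For non-abelian finite simple groups `H`, `G` and an injective
homomorphism `i : H →* G`, the map `i` is a localization iff `α ↦ α ∘ i` is a
bijection from `Aut(G)` onto the set of nontrivial homomorphisms `H →* G`. -/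
theorem statement16 (H G : Type*) [Group H] [Group G] [Finite H] [Finite G]
    [IsSimpleGroup H] [IsSimpleGroup G]
    (hH : ¬ ∀ a b : H, a * b = b * a)
    (hG : ¬ ∀ a b : G, a * b = b * a)
    (i : H →* G) (hi : Function.Injective i) :
    IsLocalizationHom i ↔
      Set.BijOn (fun α : MulAut G => α.toMonoidHom.comp i)
        Set.univ {f : H →* G | f ≠ 1} := by
  have key : ∀ ψ : G →* G, ψ = 1 ∨ ∃ α : MulAut G, α.toMonoidHom = ψ := by
    intro ψ
    rcases (MonoidHom.normal_ker ψ).eq_bot_or_eq_top with h | h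
    · right
      have hinj := (MonoidHom.ker_eq_bot_iff ψ).1 h
      exact ⟨MulEquiv.ofBijective ψ (Finite.injective_iff_bijective.1 hinj), by ext x; rfl⟩
    · left
      ext x
      have : x ∈ ψ.ker := h ▸ Subgroup.mem_top x
      simpa using this
  have hne : ∀ α : MulAut G, α.toMonoidHom.comp i ≠ 1 := by
    intro α h
    obtain ⟨x, hx⟩ := exists_ne (1 : H)
    apply hx
    apply hi
    apply α.injective
    have := DFunLike.congr_fun h x
    rw [map_one, map_one]
    exact this
  have hinjα : ∀ α β : MulAut G, α.toMonoidHom = β.toMonoidHom → α = β := by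
    intro α β h
    ext x
    exact DFunLike.congr_fun h x
  constructor
  · rintro ⟨h1, h2⟩
    refine ⟨fun α _ => hne α, fun α _ β _ h => hinjα α β (h1 h), fun f hf => ?_⟩
    obtain ⟨ψ, hψ⟩ := h2 f
    rcases key ψ with rfl | ⟨α, rfl⟩
    · exact absurd (hψ.symm.trans (MonoidHom.one_comp i)) hf
    · exact ⟨α, trivial, hψ⟩
  · rintro ⟨_, h1, h2⟩
    constructor
    · intro ψ χ h
      rcases key ψ with rfl | ⟨α, rfl⟩ <;> rcases key χ with rfl | ⟨β, rfl⟩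
      · rfl
      · exact absurd (h.symm.trans (MonoidHom.one_comp i)) (hne β)
      · exact absurd (h.trans (MonoidHom.one_comp i)) (hne α)
      · rw [h1 (Set.mem_univ α) (Set.mem_univ β) h]
    · intro f
      by_cases hf : f = 1
      · exact ⟨1, by rw [hf]; exact MonoidHom.one_comp i⟩
      · obtain ⟨α, _, hα⟩ := h2 hf
        exact ⟨α.toMonoidHom, hα⟩
end
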